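/- In 𝔽_3[T], the partial sums Σ_{m=0}^{M} Σ_{a∈A_m} i(a)·a^{13} are eventually constant in M, with eventual value γ(13) = −T^{12} − T^{10} + T^9 − T^4 + T^3 + T − 1, and the polynomial P = T^3 − T^2 + 1 divides γ(13). -/

import Mathlib

open Polynomial

/-!
Write a monic polynomial of degree `m + 1` as `X * a + C c` with `a` monic of degree `m` and `c` a
constant. For `m ≥ 1` the second coefficient ignores `c`, so one may first sum over `c`. Since
`13 = 1 + 3 + 9`, the map `a ↦ a ^ 13` is a product `φ * ψ * χ` of three powers of Frobenius, which
are `𝔽₃`-algebra homomorphisms, and summing `(φ a + c) * (ψ a + c) * (χ a + c)` over `c ∈ 𝔽₃` leaves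
`-(φ a + ψ a + χ a)`, which is linear in `a`. For a linear map one more such summation gives zero,
so only the degrees `1` and `2` contribute, and both contributions are explicit.
-/

section Semiring

variable {R : Type*} [Semiring R]

theorem natDegree_X_mul_add_C {a : R[X]} (ha : a ≠ 0) (c : R) :
    (X * a + C c).natDegree = a.natDegree + 1 := by
  have := Nontrivial.of_polynomial_ne ha
  rw [natDegree_add_C, natDegree_X_mul ha]

theorem monic_X_mul_add_C {a : R[X]} (ha : a.Monic) (c : R) : (X * a + C c).Monic := by
  nontriviality R
  rw [Monic, leadingCoeff, natDegree_X_mul_add_C ha.ne_zero]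
  simpa [coeff_C] using ha.leadingCoeff

theorem nextCoeff_X_mul_add_C {a : R[X]} (ha : a.natDegree ≠ 0) (c : R) :
    (X * a + C c).nextCoeff = a.nextCoeff := by
  obtain ⟨n, hn⟩ := Nat.exists_eq_succ_of_ne_zero ha
  have hdeg := natDegree_X_mul_add_C (ne_zero_of_natDegree_gt (Nat.pos_of_ne_zero ha)) c
  simp [nextCoeff, hdeg, hn]

theorem monic_divX {a : R[X]} (ha : a.Monic) (hdeg : a.natDegree ≠ 0) : a.divX.Monic := by
  rw [Monic, leadingCoeff, natDegree_divX_eq_natDegree_tsub_one, coeff_divX,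
    Nat.sub_add_cancel (Nat.one_le_iff_ne_zero.2 hdeg)]
  exact ha

theorem map_add_C_eq_add_smul {M : Type*} [AddCommMonoid M] [Module R M] (L : R[X] →ₗ[R] M)
    (a : R[X]) (c : R) : L (a + C c) = L a + c • L 1 := by
  rw [map_add, ← map_smul, smul_eq_C_mul, mul_one]

end Semiring

section Monics

variable {R : Type*} [Ring R] [Nontrivial R]

theorem finite_setOf_monic_natDegree_eq [Finite R] (m : ℕ) :
    {a : R[X] | a.Monic ∧ a.natDegree = m}.Finite :=
  Finite.of_equiv _ ((monicEquivDegreeLT m).trans (degreeLTEquiv R m).toEquiv).symm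

variable (R) in
/-- The set `A_m` of monic polynomials of degree `m` over a finite ring, as a `Finset`. -/
noncomputable def monicsOfDegree [Finite R] (m : ℕ) : Finset R[X] :=
  (finite_setOf_monic_natDegree_eq m).toFinset

theorem mem_monicsOfDegree [Finite R] {m : ℕ} {a : R[X]} :
    a ∈ monicsOfDegree R m ↔ a.Monic ∧ a.natDegree = m := by
  simp [monicsOfDegree]

theorem monicsOfDegree_zero [Finite R] : monicsOfDegree R 0 = {1} := by
  ext a
  rw [mem_monicsOfDegree, Finset.mem_singleton]
  exact ⟨fun h => h.1.natDegree_eq_zero.1 h.2, by rintro rfl; simp⟩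

theorem sum_monicsOfDegree_succ [Fintype R] {M : Type*} [AddCommMonoid M] (f : R[X] → M) (m : ℕ) :
    ∑ a ∈ monicsOfDegree R (m + 1), f a = ∑ a ∈ monicsOfDegree R m, ∑ c, f (X * a + C c) := by
  rw [← Finset.sum_product']
  refine Finset.sum_nbij' (fun a => (a.divX, a.coeff 0)) (fun p => X * p.1 + C p.2)
    (fun a ha => ?_) (fun p hp => ?_) (fun a _ => X_mul_divX_add a) (fun p _ => ?_)
    (fun a _ => by rw [X_mul_divX_add])
  · obtain ⟨hmonic, hdeg⟩ := mem_monicsOfDegree.1 ha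
    simp [mem_monicsOfDegree, monic_divX hmonic (by lia),
      natDegree_divX_eq_natDegree_tsub_one, hdeg]
  · obtain ⟨hmonic, hdeg⟩ := mem_monicsOfDegree.1 (Finset.mem_product.1 hp).1
    exact mem_monicsOfDegree.2
      ⟨monic_X_mul_add_C hmonic _, by rw [natDegree_X_mul_add_C hmonic.ne_zero, hdeg]⟩
  · ext <;> simp [coeff_divX, coeff_C]

/-- The sum `Σ_{a ∈ A_m} i(a) f(a)`, where `i(a)` is the second coefficient of `a`; the power sums
defining `γ(n)` are the case `f a = a ^ n`. -/
noncomputable def nextCoeffSum [Finite R] {M : Type*} [AddCommMonoid M] [Module R M]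
    (f : R[X] → M) (m : ℕ) : M :=
  ∑ a ∈ monicsOfDegree R m, a.nextCoeff • f a

theorem finsum_nextCoeff_mul_eq_nextCoeffSum [Finite R] (f : R[X] → R[X]) (m : ℕ) :
    ∑ᶠ a ∈ {a : R[X] | a.Monic ∧ a.natDegree = m}, C a.nextCoeff * f a = nextCoeffSum f m := by
  simp only [finsum_mem_eq_finite_toFinset_sum _ (finite_setOf_monic_natDegree_eq m),
    ← smul_eq_C_mul, nextCoeffSum, monicsOfDegree]

variable {M : Type*} [AddCommMonoid M] [Module R M]

theorem nextCoeffSum_zero [Finite R] (f : R[X] → M) : nextCoeffSum f 0 = 0 := by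
  simp [nextCoeffSum, monicsOfDegree_zero, nextCoeff]

variable [Fintype R]

theorem nextCoeffSum_one (f : R[X] → M) : nextCoeffSum f 1 = ∑ c, c • f (X + C c) := by
  simp [nextCoeffSum, sum_monicsOfDegree_succ, monicsOfDegree_zero]

theorem nextCoeffSum_add_two (f : R[X] → M) (m : ℕ) :
    nextCoeffSum f (m + 2) = nextCoeffSum (fun a => ∑ c, f (X * a + C c)) (m + 1) := by
  rw [nextCoeffSum, sum_monicsOfDegree_succ]
  refine Finset.sum_congr rfl fun a ha => ?_
  have hdeg : a.natDegree ≠ 0 := by rw [(mem_monicsOfDegree.1 ha).2]; exact m.succ_ne_zero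
  simp only [nextCoeff_X_mul_add_C hdeg, Finset.smul_sum]

end Monics

section Linear

variable {F M : Type*} [Field F] [Fintype F] [AddCommMonoid M] [Module F M] (L : F[X] →ₗ[F] M)

theorem sum_univ_eq_zero_of_two_lt_card (hF : 2 < Fintype.card F) : ∑ c : F, c = 0 := by
  simpa only [pow_one] using FiniteField.sum_pow_lt_card_sub_one F 1 (by lia)

theorem sum_map_add_C_eq_zero (hF : 2 < Fintype.card F) (a : F[X]) : ∑ c, L (a + C c) = 0 := by
  have hcard : Fintype.card F • L a = 0 := by
    rw [← Nat.cast_smul_eq_nsmul F, Nat.cast_card_eq_zero, zero_smul]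
  simp only [map_add_C_eq_add_smul, Finset.sum_add_distrib, Finset.sum_const, Finset.card_univ,
    hcard, ← Finset.sum_smul, sum_univ_eq_zero_of_two_lt_card hF, zero_smul, add_zero]

theorem nextCoeffSum_map_one (hF : 2 < Fintype.card F) :
    nextCoeffSum L 1 = (∑ c : F, c ^ 2) • L 1 := by
  simp only [nextCoeffSum_one, map_add_C_eq_add_smul, smul_add, smul_smul, ← sq,
    Finset.sum_add_distrib, ← Finset.sum_smul, sum_univ_eq_zero_of_two_lt_card hF, zero_smul,
    zero_add]

theorem nextCoeffSum_map_add_two (hF : 2 < Fintype.card F) (m : ℕ) :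
    nextCoeffSum L (m + 2) = 0 := by
  rw [nextCoeffSum_add_two]
  simp only [sum_map_add_C_eq_zero L hF, nextCoeffSum, smul_zero, Finset.sum_const_zero]

end Linear

section ZModThree

theorem three_eq_zero_of_algebra_zmod_three (B : Type*) [Semiring B] [Algebra (ZMod 3) B] :
    (3 : B) = 0 := by
  simpa only [map_ofNat, map_zero] using
    congrArg (algebraMap (ZMod 3) B) (by decide : (3 : ZMod 3) = 0)

theorem sum_zmod_three {M : Type*} [AddCommMonoid M] (f : ZMod 3 → M) :
    ∑ c, f c = f 0 + f 1 + f (-1) :=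
  Fin.sum_univ_three f

variable {B : Type*} [CommRing B] [Algebra (ZMod 3) B]

theorem sum_mul_mul_add_algebraMap (x y z : B) :
    ∑ c : ZMod 3, (x + algebraMap _ B c) * (y + algebraMap _ B c) * (z + algebraMap _ B c) =
      -(x + y + z) := by
  simp only [sum_zmod_three, map_zero, map_one, map_neg]
  linear_combination (x * y * z + x + y + z) * three_eq_zero_of_algebra_zmod_three B

theorem sum_smul_mul_mul_add_algebraMap (x y z : B) :
    ∑ c : ZMod 3,
        c • ((x + algebraMap _ B c) * (y + algebraMap _ B c) * (z + algebraMap _ B c)) =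
      -(x * y + x * z + y * z) - 1 := by
  simp only [sum_zmod_three, map_zero, map_one, map_neg, zero_smul, one_smul, neg_smul]
  linear_combination (x * y + x * z + y * z + 1) * three_eq_zero_of_algebra_zmod_three B

variable (φ ψ χ : (ZMod 3)[X] →ₐ[ZMod 3] B)

theorem nextCoeffSum_mul_mul_one :
    nextCoeffSum (fun a => φ a * ψ a * χ a) 1 =
      -(φ X * ψ X + φ X * χ X + ψ X * χ X) - 1 := by
  simp only [nextCoeffSum_one, map_add, ← algebraMap_eq, AlgHom.commutes,
    sum_smul_mul_mul_add_algebraMap]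

theorem nextCoeffSum_mul_mul_add_two (m : ℕ) :
    nextCoeffSum (fun a => φ a * ψ a * χ a) (m + 2) =
      nextCoeffSum (-((φ.toLinearMap + ψ.toLinearMap + χ.toLinearMap) ∘ₗ
        LinearMap.mulLeft (ZMod 3) X)) (m + 1) := by
  rw [nextCoeffSum_add_two]
  congr 1
  ext a
  simp only [map_add, ← algebraMap_eq, AlgHom.commutes, sum_mul_mul_add_algebraMap]
  simp

theorem nextCoeffSum_mul_mul_two :
    nextCoeffSum (fun a => φ a * ψ a * χ a) 2 = φ X + ψ X + χ X := by
  have hsq : ∑ c : ZMod 3, c ^ 2 = -1 := by decide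
  rw [nextCoeffSum_mul_mul_add_two φ ψ χ 0, nextCoeffSum_map_one _ (by simp), hsq,
    neg_smul, one_smul, LinearMap.neg_apply, neg_neg]
  simp

theorem nextCoeffSum_mul_mul_add_three (m : ℕ) :
    nextCoeffSum (fun a => φ a * ψ a * χ a) (m + 3) = 0 := by
  rw [nextCoeffSum_mul_mul_add_two φ ψ χ (m + 1), nextCoeffSum_map_add_two _ (by simp)]

theorem sum_range_nextCoeffSum_mul_mul {N : ℕ} (hN : 3 ≤ N) :
    ∑ m ∈ Finset.range N, nextCoeffSum (fun a => φ a * ψ a * χ a) m =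
      φ X + ψ X + χ X - (φ X * ψ X + φ X * χ X + ψ X * χ X) - 1 := by
  have hvanish (m : ℕ) (hm : m ≥ 3) : nextCoeffSum (fun a => φ a * ψ a * χ a) m = 0 := by
    obtain ⟨k, rfl⟩ := Nat.exists_eq_add_of_le' hm
    exact nextCoeffSum_mul_mul_add_three φ ψ χ k
  rw [Finset.eventually_constant_sum hvanish hN]
  simp only [Finset.sum_range_succ, Finset.sum_range_zero, nextCoeffSum_zero,
    nextCoeffSum_mul_mul_one, nextCoeffSum_mul_mul_two]
  ring

end ZModThree

theorem sum_range_nextCoeffSum_pow_sum_three_pow (i j k : ℕ) {N : ℕ} (hN : 3 ≤ N) :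
    ∑ m ∈ Finset.range N,
        nextCoeffSum (fun a : (ZMod 3)[X] => a ^ (3 ^ i + 3 ^ j + 3 ^ k)) m =
      X ^ 3 ^ i + X ^ 3 ^ j + X ^ 3 ^ k -
        (X ^ (3 ^ i + 3 ^ j) + X ^ (3 ^ i + 3 ^ k) + X ^ (3 ^ j + 3 ^ k)) - 1 := by
  let frob := FiniteField.frobeniusAlgHom (ZMod 3) (ZMod 3)[X]
  have hfrob (n : ℕ) (a : (ZMod 3)[X]) : (frob ^ n) a = a ^ 3 ^ n := by
    rw [AlgHom.coe_pow, FiniteField.coe_frobeniusAlgHom, pow_iterate, ZMod.card]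
  simpa only [hfrob, pow_add] using
    sum_range_nextCoeffSum_mul_mul (frob ^ i) (frob ^ j) (frob ^ k) hN

theorem X_cube_sub_X_sq_add_one_dvd_gamma_thirteen :
    (X ^ 3 - X ^ 2 + 1 : (ZMod 3)[X]) ∣
      -X ^ 12 - X ^ 10 + X ^ 9 - X ^ 4 + X ^ 3 + X - 1 := by
  refine ⟨-X ^ 9 - X ^ 8 + X ^ 7 + X ^ 5 - X ^ 2 + X - 1, ?_⟩
  linear_combination (X ^ 3 - X ^ 4 + X ^ 9 - X ^ 10 : (ZMod 3)[X]) *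
    three_eq_zero_of_algebra_zmod_three (ZMod 3)[X]

/-- In `𝔽_3[T]`, the partial sums `Σ_{m=0}^{M} Σ_{a ∈ A_m} i(a)·a^13` are eventually constant
in `M`, with eventual value `γ(13) = −T^12 − T^10 + T^9 − T^4 + T^3 + T − 1`, and
`P = T^3 − T^2 + 1` divides `γ(13)`. Here `i(a) = a.nextCoeff` is the coefficient of
`T^(deg a − 1)` (and `i(a) = 0` for `deg a = 0`), an element of `𝔽_3 = ℤ/3ℤ`. -/
theorem stmt_10 :
    (∃ M₀ : ℕ, ∀ M ≥ M₀,
      (∑ m ∈ Finset.range (M + 1),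
        ∑ᶠ a ∈ {a : Polynomial (ZMod 3) | a.Monic ∧ a.natDegree = m},
          Polynomial.C a.nextCoeff * a ^ 13) =
        (-X ^ 12 - X ^ 10 + X ^ 9 - X ^ 4 + X ^ 3 + X - 1 : Polynomial (ZMod 3))) ∧
    (X ^ 3 - X ^ 2 + 1 : Polynomial (ZMod 3)) ∣
      (-X ^ 12 - X ^ 10 + X ^ 9 - X ^ 4 + X ^ 3 + X - 1) := by
  refine ⟨⟨2, fun M hM => ?_⟩, X_cube_sub_X_sq_add_one_dvd_gamma_thirteen⟩
  have hγ := sum_range_nextCoeffSum_pow_sum_three_pow 0 1 2 (Nat.succ_le_succ hM)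
  norm_num only at hγ
  simp only [finsum_nextCoeff_mul_eq_nextCoeffSum, hγ]
  ring
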